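/- For every D ∈ (0, D_max) there exists a probability mass function Q* on Â achieving the infimum defining R(D), i.e., R(P,Q*,D) = R(D), and this Q* satisfies D_min^{P,Q*} < D < D_max^{P,Q*}. -/

import Mathlib

open Real MeasureTheory Finset
open scoped Classical

/-- `Q` is a probability mass function on `Fin k`. -/
def IsPmf {k : ℕ} (Q : Fin k → ℝ) : Prop := (∀ j, 0 ≤ Q j) ∧ ∑ j, Q j = 1

/-- `Λ_{P,Q}(λ) = E_P[ln Σ_j Q_j e^{λ ρ(X,a_j)}]`. -/
noncomputable def Lam {k : ℕ} (P : Measure ℝ) (ρ : ℝ → Fin k → ℝ)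
    (Q : Fin k → ℝ) (l : ℝ) : ℝ :=
  ∫ x, Real.log (∑ j, Q j * Real.exp (l * ρ x j)) ∂P

/-- The cost `∫ Σ_j W(x)({a_j}) log₂ (W(x)({a_j}) / Q_j) dP(x)` of a Markov kernel,
with the conventions `0 · log 0 = 0` (automatic in Lean) and value `⊤` if on a set of
positive `P`-measure `w x j > 0` for some `j` with `Q j = 0`. -/
noncomputable def wCost {k : ℕ} (P : Measure ℝ) (Q : Fin k → ℝ)
    (w : ℝ → Fin k → ℝ) : EReal :=
  if ∀ᵐ x ∂P, ∀ j, 0 < w x j → 0 < Q j then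
    ((∫ x, ∑ j, w x j * Real.logb 2 (w x j / Q j) ∂P : ℝ) : EReal)
  else ⊤

/-- `R(P,Q,D)`: infimum over Markov kernels `w` from `ℝ` to `Fin k` with
`∫ Σ_j w x j ρ(x,a_j) dP ≤ D` of the relative-entropy cost. -/
noncomputable def RPQ {k : ℕ} (P : Measure ℝ) (ρ : ℝ → Fin k → ℝ)
    (Q : Fin k → ℝ) (D : ℝ) : EReal :=
  ⨅ w ∈ {w : ℝ → Fin k → ℝ | Measurable w ∧ (∀ x j, 0 ≤ w x j) ∧
      (∀ x, ∑ j, w x j = 1) ∧ ∫ x, ∑ j, w x j * ρ x j ∂P ≤ D}, wCost P Q w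

/-- The rate-distortion function `R(D) = inf_Q R(P,Q,D)`. -/
noncomputable def RofD {k : ℕ} (P : Measure ℝ) (ρ : ℝ → Fin k → ℝ) (D : ℝ) : EReal :=
  ⨅ Q ∈ {Q : Fin k → ℝ | IsPmf Q}, RPQ P ρ Q D

/-- `D_max = min_j E_P[ρ(X,a_j)]`. -/
noncomputable def Dmax {k : ℕ} (P : Measure ℝ) (ρ : ℝ → Fin k → ℝ) : ℝ :=
  sInf (Set.range fun j => ∫ x, ρ x j ∂P)

/-- `D_min^{P,Q} = E_P[min_{a ∈ supp Q} ρ(X,a)]`. -/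
noncomputable def DminPQ {k : ℕ} (P : Measure ℝ) (ρ : ℝ → Fin k → ℝ)
    (Q : Fin k → ℝ) : ℝ :=
  ∫ x, (⨅ j : {j : Fin k // 0 < Q j}, ρ x (j : Fin k)) ∂P

/-- `D_max^{P,Q} = Σ_j Q_j · E_P[ρ(X,a_j)]`. -/
noncomputable def DmaxPQ {k : ℕ} (P : Measure ℝ) (ρ : ℝ → Fin k → ℝ)
    (Q : Fin k → ℝ) : ℝ :=
  ∑ j, Q j * ∫ x, ρ x j ∂P

/-- The Fenchel–Legendre transform `Λ*_{P,Q}(D) = sup_{λ ≤ 0} [λ·D − Λ_{P,Q}(λ)]`. -/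
noncomputable def LamStar {k : ℕ} (P : Measure ℝ) (ρ : ℝ → Fin k → ℝ)
    (Q : Fin k → ℝ) (D : ℝ) : EReal :=
  ⨆ l ∈ Set.Iic (0 : ℝ), ((l * D - Lam P ρ Q l : ℝ) : EReal)

/-!
Write `Λ_{P,Q}(λ)` for the `P`-average of the log-partition function of the tilt of `Q` by
`λ ρ(x, ·)`. By the Gibbs variational principle, `R(P,Q,D) ln 2 ≥ λ D - Λ_{P,Q}(λ)` for all
`λ ≤ 0`, with equality if the exponentially tilted kernel has distortion exactly `D`.
The right-hand side is convex in `Q` and concave in `λ`, so on the product of the simplex and a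
segment `[-L, 0]` it has a saddle point `(Q*, λ*)` by Sion's theorem. Its value is nonnegative
(take `λ = 0`), which for the uniform `Q` bounds `-λ*`; and `D < D_max` makes the `λ`-derivative
at `0` negative. Hence, for `L` large, `λ*` is interior, and the first-order condition says that
the tilted kernel has distortion `D`: `Q*` attains `R(D)`. This kernel charges the whole support
of `Q*`, so its distortion could equal `D_min^{P,Q*}` only if all kernels supported there had the
same distortion, contradicting `D < D_max^{P,Q*}`.
-/

section Simplex

variable {ι : Type*} [Fintype ι] {w r : ι → ℝ} {m : ℝ}

lemma dotProduct_sub_of_mem_stdSimplex (hw : w ∈ stdSimplex ℝ ι) (r : ι → ℝ) (m : ℝ) :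
    w ⬝ᵥ r - m = ∑ j, w j * (r j - m) := by
  simp only [dotProduct, mul_sub, sum_sub_distrib, ← sum_mul, hw.2, one_mul]

lemma abs_dotProduct_le_norm (hw : w ∈ stdSimplex ℝ ι) (r : ι → ℝ) : |w ⬝ᵥ r| ≤ ‖r‖ :=
  calc |w ⬝ᵥ r| ≤ ∑ j, |w j * r j| := abs_sum_le_sum_abs _ _
    _ ≤ ∑ j, w j * ‖r‖ := sum_le_sum fun j _ => by
        rw [abs_mul, abs_of_nonneg (hw.1 j)]
        exact mul_le_mul_of_nonneg_left (norm_le_pi_norm r j) (hw.1 j)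
    _ = ‖r‖ := by rw [← sum_mul, hw.2, one_mul]

lemma mul_sub_nonneg_of_le_on_support (hw : w ∈ stdSimplex ℝ ι) (h : ∀ j, 0 < w j → m ≤ r j)
    (j : ι) : 0 ≤ w j * (r j - m) := by
  rcases (hw.1 j).eq_or_lt with hj | hj
  · rw [← hj, zero_mul]
  · exact mul_nonneg hj.le (sub_nonneg.2 (h j hj))

lemma le_dotProduct_of_le_on_support (hw : w ∈ stdSimplex ℝ ι) (h : ∀ j, 0 < w j → m ≤ r j) :
    m ≤ w ⬝ᵥ r := by
  rw [← sub_nonneg, dotProduct_sub_of_mem_stdSimplex hw]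
  exact sum_nonneg fun j _ => mul_sub_nonneg_of_le_on_support hw h j

lemma dotProduct_eq_iff_of_le_on_support (hw : w ∈ stdSimplex ℝ ι)
    (h : ∀ j, 0 < w j → m ≤ r j) : w ⬝ᵥ r = m ↔ ∀ j, 0 < w j → r j = m := by
  rw [← sub_eq_zero, dotProduct_sub_of_mem_stdSimplex hw,
    sum_eq_zero_iff_of_nonneg fun j _ => mul_sub_nonneg_of_le_on_support hw h j]
  refine ⟨fun h0 j hj => ?_, fun h0 j _ => ?_⟩
  · exact sub_eq_zero.1 ((mul_eq_zero.1 (h0 j (mem_univ j))).resolve_left hj.ne')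
  · rcases (hw.1 j).eq_or_lt with hj | hj
    · rw [← hj, zero_mul]
    · rw [h0 j hj, sub_self, mul_zero]

lemma exists_pos_of_mem_stdSimplex (hw : w ∈ stdSimplex ℝ ι) : ∃ j, 0 < w j := by
  by_contra! h
  linarith [hw.2, sum_nonpos fun j (_ : j ∈ univ) => h j]

lemma const_inv_card_mem_stdSimplex [Nonempty ι] :
    (fun _ => (Fintype.card ι : ℝ)⁻¹) ∈ stdSimplex ℝ ι :=
  ⟨fun _ => by positivity, by simp⟩

end Simplex

section RelativeEntropy

variable {ι : Type*} [Fintype ι] {Q w p : ι → ℝ}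

/-- The relative entropy `D(w‖Q)`, in nats, of two probability vectors on a finite alphabet. Since
`x / 0 = 0` and `log 0 = 0`, it is only meaningful when `w` is absolutely continuous with respect
to `Q`. -/
noncomputable def relEntropy (w Q : ι → ℝ) : ℝ := ∑ j, w j * log (w j / Q j)

lemma relEntropy_self (w : ι → ℝ) : relEntropy w w = 0 :=
  sum_eq_zero fun j _ => by rcases eq_or_ne (w j) 0 with h | h <;> simp [h]

lemma sub_le_mul_log_div {x y : ℝ} (hx : 0 ≤ x) (hy : 0 ≤ y) (h : 0 < x → 0 < y) :
    x - y ≤ x * log (x / y) := by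
  rcases hx.eq_or_lt with rfl | hx
  · simpa using hy
  · calc x - y = x * (1 - (x / y)⁻¹) := by field_simp
      _ ≤ x * log (x / y) :=
        mul_le_mul_of_nonneg_left (one_sub_inv_le_log_of_pos (div_pos hx (h hx))) hx.le

lemma relEntropy_nonneg (hw : w ∈ stdSimplex ℝ ι) (hp : p ∈ stdSimplex ℝ ι)
    (hwp : ∀ j, 0 < w j → 0 < p j) : 0 ≤ relEntropy w p :=
  calc 0 = ∑ j, (w j - p j) := by rw [sum_sub_distrib, hw.2, hp.2, sub_self]
    _ ≤ relEntropy w p := sum_le_sum fun j _ => sub_le_mul_log_div (hw.1 j) (hp.1 j) (hwp j)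

lemma abs_mul_log_div_le {x : ℝ} (hx : x ∈ Set.Icc 0 1) (y : ℝ) :
    |x * log (x / y)| ≤ 1 + |log y| := by
  rcases hx.1.eq_or_lt with rfl | hx0
  · simp only [zero_mul, abs_zero]
    positivity
  rcases eq_or_ne y 0 with rfl | hy
  · simp
  calc |x * log (x / y)| = |log x * x - x * log y| := by
        rw [log_div hx0.ne' hy, mul_sub, mul_comm x (log x)]
    _ ≤ |log x * x| + |x * log y| := abs_sub _ _
    _ ≤ 1 + |log y| := by
        rw [abs_mul x, abs_of_pos hx0]
        exact add_le_add (abs_log_mul_self_lt x hx0 hx.2).le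
          (mul_le_of_le_one_left (abs_nonneg _) hx.2)

lemma abs_relEntropy_le (hw : w ∈ stdSimplex ℝ ι) (Q : ι → ℝ) :
    |relEntropy w Q| ≤ ∑ j, (1 + |log (Q j)|) :=
  (abs_sum_le_sum_abs _ _).trans <| sum_le_sum fun j _ =>
    abs_mul_log_div_le (mem_Icc_of_mem_stdSimplex hw j) (Q j)

end RelativeEntropy

section LogPartition

variable {ι : Type*} [Fintype ι] {Q w : ι → ℝ}

/-- The log-partition function `ln Σ_j Q_j e^{s_j}` of the tilt `s` of the probability vector `Q`.
The paper's `Λ_{P,Q}(λ)` is the `P`-average of `logPartition Q (λ • ρ x)`. -/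
noncomputable def logPartition (Q s : ι → ℝ) : ℝ := log (∑ j, Q j * exp (s j))

/-- The exponential tilting of `Q` by `s`: the probability vector proportional to `Q_j e^{s_j}`. -/
noncomputable def tiltedPmf (Q s : ι → ℝ) (j : ι) : ℝ := Q j * exp (s j) / ∑ i, Q i * exp (s i)

lemma sum_mul_exp_pos (hQ : Q ∈ stdSimplex ℝ ι) (s : ι → ℝ) : 0 < ∑ j, Q j * exp (s j) := by
  obtain ⟨j, hj⟩ := exists_pos_of_mem_stdSimplex hQ
  exact sum_pos' (fun i _ => mul_nonneg (hQ.1 i) (exp_pos _).le)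
    ⟨j, mem_univ j, mul_pos hj (exp_pos _)⟩

lemma tiltedPmf_mem_stdSimplex (hQ : Q ∈ stdSimplex ℝ ι) (s : ι → ℝ) :
    tiltedPmf Q s ∈ stdSimplex ℝ ι := by
  refine ⟨fun j => div_nonneg (mul_nonneg (hQ.1 j) (exp_pos _).le) (sum_mul_exp_pos hQ s).le, ?_⟩
  simp only [tiltedPmf, ← sum_div, div_self (sum_mul_exp_pos hQ s).ne']

lemma tiltedPmf_pos_iff (hQ : Q ∈ stdSimplex ℝ ι) (s : ι → ℝ) (j : ι) :
    0 < tiltedPmf Q s j ↔ 0 < Q j := by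
  rw [tiltedPmf, div_pos_iff_of_pos_right (sum_mul_exp_pos hQ s),
    mul_pos_iff_of_pos_right (exp_pos _)]

lemma logPartition_zero (hQ : Q ∈ stdSimplex ℝ ι) : logPartition Q 0 = 0 := by
  simp [logPartition, hQ.2]

lemma tiltedPmf_zero (hQ : Q ∈ stdSimplex ℝ ι) : tiltedPmf Q 0 = Q := by
  funext j
  simp [tiltedPmf, hQ.2]

lemma continuous_logPartition (hQ : Q ∈ stdSimplex ℝ ι) : Continuous (logPartition Q) :=
  Continuous.log (by fun_prop) fun s => (sum_mul_exp_pos hQ s).ne'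

lemma continuousOn_logPartition_left (s : ι → ℝ) :
    ContinuousOn (fun Q => logPartition Q s) (stdSimplex ℝ ι) :=
  ContinuousOn.log (by fun_prop) fun _ hQ => (sum_mul_exp_pos hQ s).ne'

lemma continuous_tiltedPmf (hQ : Q ∈ stdSimplex ℝ ι) : Continuous (tiltedPmf Q) :=
  continuous_pi fun _ => Continuous.div (by fun_prop) (by fun_prop)
    fun s => (sum_mul_exp_pos hQ s).ne'

lemma log_tiltedPmf_div (hQ : Q ∈ stdSimplex ℝ ι) (s : ι → ℝ) {j : ι} (hj : 0 < Q j) :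
    log (tiltedPmf Q s j / Q j) = s j - logPartition Q s := by
  rw [tiltedPmf, div_right_comm, mul_div_cancel_left₀ _ hj.ne',
    log_div (exp_pos _).ne' (sum_mul_exp_pos hQ s).ne', log_exp, logPartition]

lemma relEntropy_eq_add_relEntropy_tiltedPmf (hQ : Q ∈ stdSimplex ℝ ι) (hw : w ∈ stdSimplex ℝ ι)
    (hwQ : ∀ j, 0 < w j → 0 < Q j) (s : ι → ℝ) :
    relEntropy w Q = w ⬝ᵥ s - logPartition Q s + relEntropy w (tiltedPmf Q s) := by
  rw [dotProduct_sub_of_mem_stdSimplex hw, relEntropy, relEntropy, ← sum_add_distrib]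
  refine sum_congr rfl fun j _ => ?_
  rcases (hw.1 j).eq_or_lt with hj | hj
  · simp only [← hj, zero_mul, add_zero]
  have hQj := hwQ j hj
  have ht := (tiltedPmf_pos_iff hQ s j).2 hQj
  rw [← log_tiltedPmf_div hQ s hQj, log_div hj.ne' hQj.ne', log_div ht.ne' hQj.ne',
    log_div hj.ne' ht.ne']
  ring

lemma dotProduct_sub_logPartition_le_relEntropy (hQ : Q ∈ stdSimplex ℝ ι)
    (hw : w ∈ stdSimplex ℝ ι) (hwQ : ∀ j, 0 < w j → 0 < Q j) (s : ι → ℝ) :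
    w ⬝ᵥ s - logPartition Q s ≤ relEntropy w Q := by
  rw [relEntropy_eq_add_relEntropy_tiltedPmf hQ hw hwQ s]
  exact le_add_of_nonneg_right <| relEntropy_nonneg hw (tiltedPmf_mem_stdSimplex hQ s)
    fun j hj => (tiltedPmf_pos_iff hQ s j).2 (hwQ j hj)

lemma relEntropy_tiltedPmf (hQ : Q ∈ stdSimplex ℝ ι) (s : ι → ℝ) :
    relEntropy (tiltedPmf Q s) Q = tiltedPmf Q s ⬝ᵥ s - logPartition Q s := by
  rw [relEntropy_eq_add_relEntropy_tiltedPmf hQ (tiltedPmf_mem_stdSimplex hQ s)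
    (fun j => (tiltedPmf_pos_iff hQ s j).1) s, relEntropy_self, add_zero]

lemma abs_logPartition_le_norm (hQ : Q ∈ stdSimplex ℝ ι) (s : ι → ℝ) :
    |logPartition Q s| ≤ ‖s‖ := by
  have ht := tiltedPmf_mem_stdSimplex hQ s
  have hlower : Q ⬝ᵥ s ≤ logPartition Q s := by
    simpa [relEntropy_self] using
      dotProduct_sub_logPartition_le_relEntropy hQ hQ (fun _ => id) s
  have hupper : logPartition Q s ≤ tiltedPmf Q s ⬝ᵥ s := by
    have := relEntropy_nonneg ht hQ fun j => (tiltedPmf_pos_iff hQ s j).1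
    rwa [relEntropy_tiltedPmf hQ, sub_nonneg] at this
  exact abs_le.2 ⟨(abs_le.1 (abs_dotProduct_le_norm hQ s)).1.trans hlower,
    hupper.trans (abs_le.1 (abs_dotProduct_le_norm ht s)).2⟩

lemma log_add_le_logPartition (hQ : Q ∈ stdSimplex ℝ ι) (s : ι → ℝ) {j : ι} (hj : 0 < Q j) :
    log (Q j) + s j ≤ logPartition Q s := by
  rw [← log_exp (s j), ← log_mul hj.ne' (exp_pos _).ne']
  exact log_le_log (mul_pos hj (exp_pos _)) <|
    single_le_sum (f := fun i => Q i * exp (s i))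
      (fun i _ => mul_nonneg (hQ.1 i) (exp_pos _).le) (mem_univ j)

lemma neg_log_card_add_mul_iInf_le_logPartition [Nonempty ι] (l : ℝ) (r : ι → ℝ) :
    -log (Fintype.card ι) + l * ⨅ j, r j
      ≤ logPartition (fun _ => (Fintype.card ι : ℝ)⁻¹) (l • r) := by
  obtain ⟨j, hj⟩ := exists_eq_ciInf_of_finite (f := r)
  rw [← hj, ← log_inv]
  exact log_add_le_logPartition const_inv_card_mem_stdSimplex (l • r) (j := j) (by positivity)

-- By the Gibbs variational principle, `logPartition Q` is a supremum of affine functions of `s`.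
lemma convexOn_logPartition (hQ : Q ∈ stdSimplex ℝ ι) :
    ConvexOn ℝ Set.univ (logPartition Q) := by
  refine ⟨convex_univ, fun s _ t _ a b ha hb hab => ?_⟩
  set w := tiltedPmf Q (a • s + b • t)
  have hw : w ∈ stdSimplex ℝ ι := tiltedPmf_mem_stdSimplex hQ _
  have hwQ (j : ι) : 0 < w j → 0 < Q j := (tiltedPmf_pos_iff hQ _ j).1
  have heq : relEntropy w Q = w ⬝ᵥ (a • s + b • t) - logPartition Q (a • s + b • t) :=
    relEntropy_tiltedPmf hQ _
  have hs := mul_le_mul_of_nonneg_left (dotProduct_sub_logPartition_le_relEntropy hQ hw hwQ s) ha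
  have ht := mul_le_mul_of_nonneg_left (dotProduct_sub_logPartition_le_relEntropy hQ hw hwQ t) hb
  have hsum : a * relEntropy w Q + b * relEntropy w Q = relEntropy w Q := by
    rw [← add_mul, hab, one_mul]
  rw [dotProduct_add, dotProduct_smul, dotProduct_smul] at heq
  simp only [smul_eq_mul] at heq ⊢
  linarith

lemma concaveOn_logPartition_left (s : ι → ℝ) :
    ConcaveOn ℝ (stdSimplex ℝ ι) (fun Q => logPartition Q s) :=
  (strictConcaveOn_log_Ioi.concaveOn.comp_linearMap
    (Fintype.linearCombination ℝ fun j => exp (s j))).subset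
    (fun _ hQ => sum_mul_exp_pos hQ s) (convex_stdSimplex ℝ ι)

lemma hasDerivAt_logPartition_smul (hQ : Q ∈ stdSimplex ℝ ι) (r : ι → ℝ) (l : ℝ) :
    HasDerivAt (fun l : ℝ => logPartition Q (l • r)) (tiltedPmf Q (l • r) ⬝ᵥ r) l := by
  have hsum : HasDerivAt (fun l : ℝ => ∑ j, Q j * exp ((l • r) j))
      (∑ j, Q j * (exp ((l • r) j) * r j)) l :=
    HasDerivAt.fun_sum fun j _ => (hasDerivAt_mul_const (r j)).exp.const_mul (Q j)
  refine (hsum.log (sum_mul_exp_pos hQ _).ne').congr_deriv ?_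
  rw [sum_div]
  exact sum_congr rfl fun j _ => by rw [tiltedPmf]; ring

end LogPartition

lemma nonneg_of_isMaxOn_Icc_of_hasDerivAt_right {f : ℝ → ℝ} {f' a b : ℝ} (hab : a < b)
    (hmax : IsMaxOn f (Set.Icc a b) b) (hf : HasDerivAt f f' b) : 0 ≤ f' := by
  have hcone : a - b ∈ posTangentConeAt (Set.Icc a b) b :=
    sub_mem_posTangentConeAt_of_segment_subset (segment_symm ℝ a b ▸ segment_subset_Icc hab.le)
  have hderiv := hmax.localize.hasFDerivWithinAt_nonpos hf.hasFDerivAt.hasFDerivWithinAt hcone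
  rw [ContinuousLinearMap.toSpanSingleton_apply, smul_eq_mul] at hderiv
  exact nonneg_of_mul_nonpos_right hderiv (sub_neg.2 hab)

section Integrated

variable {Ω ι : Type*} [MeasurableSpace Ω] [Fintype ι] {μ : Measure Ω} {Q : ι → ℝ}
  {r w : Ω → ι → ℝ}

lemma integrable_iInf_of_integrable {κ : Type*} [Finite κ] [Nonempty κ] {f : κ → Ω → ℝ}
    (hf : ∀ j, Integrable (f j) μ) : Integrable (fun x => ⨅ j, f j x) μ := by
  have := Fintype.ofFinite κ
  refine (integrable_finsetSum univ fun j _ => (hf j).norm).mono'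
    (AEMeasurable.iInf fun j => (hf j).aemeasurable).aestronglyMeasurable (ae_of_all _ fun x => ?_)
  obtain ⟨j, hj⟩ := exists_eq_ciInf_of_finite (f := fun j => f j x)
  rw [← hj]
  exact single_le_sum (f := fun j => ‖f j x‖) (fun i _ => norm_nonneg _) (mem_univ j)

lemma integrable_dotProduct (hr : Integrable r μ) (hwm : AEStronglyMeasurable w μ)
    (hw : ∀ x, w x ∈ stdSimplex ℝ ι) : Integrable (fun x => w x ⬝ᵥ r x) μ :=
  hr.norm.mono' ((by fun_prop : Continuous fun p : (ι → ℝ) × (ι → ℝ) => p.1 ⬝ᵥ p.2)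
    |>.comp_aestronglyMeasurable (hwm.prodMk hr.1))
    (ae_of_all _ fun x => abs_dotProduct_le_norm (hw x) (r x))

lemma integral_const_dotProduct (hr : Integrable r μ) (Q : ι → ℝ) :
    ∫ x, Q ⬝ᵥ r x ∂μ = ∑ j, Q j * ∫ x, r x j ∂μ := by
  simp only [dotProduct]
  rw [integral_finsetSum _ fun j _ => (hr.eval j).const_mul (Q j)]
  simp only [integral_const_mul]

lemma integrable_logPartition (hQ : Q ∈ stdSimplex ℝ ι) (hr : Integrable r μ) :
    Integrable (fun x => logPartition Q (r x)) μ :=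
  hr.norm.mono' ((continuous_logPartition hQ).comp_aestronglyMeasurable hr.1)
    (ae_of_all _ fun x => abs_logPartition_le_norm hQ (r x))

lemma integrable_relEntropy [IsFiniteMeasure μ] (hwm : Measurable w)
    (hw : ∀ x, w x ∈ stdSimplex ℝ ι) (Q : ι → ℝ) : Integrable (fun x => relEntropy (w x) Q) μ := by
  refine Integrable.of_bound (Measurable.aestronglyMeasurable ?_) _
    (ae_of_all _ fun x => abs_relEntropy_le (hw x) Q)
  unfold relEntropy
  fun_prop

lemma continuousOn_integral_logPartition_left (hr : Integrable r μ) :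
    ContinuousOn (fun Q => ∫ x, logPartition Q (r x) ∂μ) (stdSimplex ℝ ι) :=
  continuousOn_of_dominated (fun _ hQ => (integrable_logPartition hQ hr).1)
    (fun _ hQ => ae_of_all _ fun x => abs_logPartition_le_norm hQ (r x)) hr.norm
    (ae_of_all _ fun x => continuousOn_logPartition_left (r x))

lemma hasDerivAt_integral_logPartition_smul (hQ : Q ∈ stdSimplex ℝ ι) (hr : Integrable r μ)
    (l : ℝ) : HasDerivAt (fun l : ℝ => ∫ x, logPartition Q (l • r x) ∂μ)
      (∫ x, tiltedPmf Q (l • r x) ⬝ᵥ r x ∂μ) l :=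
  (hasDerivAt_integral_of_dominated_loc_of_deriv_le (bound := fun x => ‖r x‖) Filter.univ_mem
    (Filter.Eventually.of_forall fun m => (integrable_logPartition hQ (hr.smul m)).1)
    (integrable_logPartition hQ (hr.smul l))
    (integrable_dotProduct hr
      ((continuous_tiltedPmf hQ).comp_aestronglyMeasurable (hr.1.const_smul l))
      fun _ => tiltedPmf_mem_stdSimplex hQ _).1
    (ae_of_all _ fun x _ _ => abs_dotProduct_le_norm (tiltedPmf_mem_stdSimplex hQ _) (r x))
    hr.norm (ae_of_all _ fun x m _ => hasDerivAt_logPartition_smul hQ (r x) m)).2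

lemma integral_iInf_support_lt_integral_dotProduct (hQ : Q ∈ stdSimplex ℝ ι)
    (hr : Integrable r μ) (hwm : AEStronglyMeasurable w μ) (hw : ∀ x, w x ∈ stdSimplex ℝ ι)
    (hwQ : ∀ x j, 0 < w x j ↔ 0 < Q j) (hne : ∫ x, Q ⬝ᵥ r x ∂μ ≠ ∫ x, w x ⬝ᵥ r x ∂μ) :
    ∫ x, ⨅ j : {j // 0 < Q j}, r x j ∂μ < ∫ x, w x ⬝ᵥ r x ∂μ := by
  obtain ⟨j₀, hj₀⟩ := exists_pos_of_mem_stdSimplex hQ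
  have : Nonempty {j // 0 < Q j} := ⟨⟨j₀, hj₀⟩⟩
  have hiInf_le (x : Ω) (j : ι) (hj : 0 < Q j) : ⨅ i : {i // 0 < Q i}, r x i ≤ r x j :=
    ciInf_le (Set.finite_range _).bddBelow (⟨j, hj⟩ : {i // 0 < Q i})
  have hle (x : Ω) : ⨅ j : {j // 0 < Q j}, r x j ≤ w x ⬝ᵥ r x :=
    le_dotProduct_of_le_on_support (hw x) fun j hj => hiInf_le x j ((hwQ x j).1 hj)
  have hInf : Integrable (fun x => ⨅ j : {j // 0 < Q j}, r x j) μ :=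
    integrable_iInf_of_integrable fun j => hr.eval j
  have hdot := integrable_dotProduct hr hwm hw
  refine (integral_mono hInf hdot hle).lt_of_ne fun heq => hne (integral_congr_ae ?_)
  have hae := (integral_eq_iff_of_ae_le hInf hdot (ae_of_all _ hle)).1 heq
  -- Equality makes `r x` constant on the common support, so every kernel has the same distortion.
  filter_upwards [hae] with x hx
  rw [← hx, dotProduct_eq_iff_of_le_on_support hQ (hiInf_le x)]
  exact fun j hj => (dotProduct_eq_iff_of_le_on_support (hw x)
    fun i hi => hiInf_le x i ((hwQ x i).1 hi)).1 hx.symm j ((hwQ x j).2 hj)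

end Integrated

section Duality

variable {Ω ι : Type*} [MeasurableSpace Ω] [Fintype ι] {μ : Measure Ω} {Q : ι → ℝ}
  {r w : Ω → ι → ℝ}

/-- The Lagrangian dual objective `λ D - Λ_{μ,Q}(λ)` (in nats) of minimizing the relative entropy
of a kernel with respect to `Q` subject to expected distortion at most `D`; the multiplier is
parametrized as in the paper, by `λ ≤ 0`. -/
noncomputable def dualObjective (μ : Measure Ω) (r : Ω → ι → ℝ) (D : ℝ) (Q : ι → ℝ) (l : ℝ) : ℝ :=
  l * D - ∫ x, logPartition Q (l • r x) ∂μ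

lemma dualObjective_zero (hQ : Q ∈ stdSimplex ℝ ι) (r : Ω → ι → ℝ) (D : ℝ) :
    dualObjective μ r D Q 0 = 0 := by
  simp [dualObjective, logPartition_zero hQ]

lemma hasDerivAt_dualObjective (hQ : Q ∈ stdSimplex ℝ ι) (hr : Integrable r μ) (D l : ℝ) :
    HasDerivAt (dualObjective μ r D Q) (D - ∫ x, tiltedPmf Q (l • r x) ⬝ᵥ r x ∂μ) l :=
  (hasDerivAt_mul_const D).sub (hasDerivAt_integral_logPartition_smul hQ hr l)

lemma convexOn_dualObjective_left (hr : Integrable r μ) (D l : ℝ) :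
    ConvexOn ℝ (stdSimplex ℝ ι) (fun Q => dualObjective μ r D Q l) :=
  (convexOn_const (l * D) (convex_stdSimplex ℝ ι)).sub <|
    integral_concaveOn_of_integrand_ae (convex_stdSimplex ℝ ι)
      (ae_of_all _ fun x => concaveOn_logPartition_left (l • r x))
      fun _ hQ => integrable_logPartition hQ (hr.smul l)

lemma concaveOn_dualObjective (hQ : Q ∈ stdSimplex ℝ ι) (hr : Integrable r μ) (D : ℝ) :
    ConcaveOn ℝ Set.univ (dualObjective μ r D Q) :=
  ((LinearMap.mulRight ℝ D).concaveOn convex_univ).sub <|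
    integral_convexOn_of_integrand_ae convex_univ
      (ae_of_all _ fun x =>
        (convexOn_logPartition hQ).comp_linearMap (LinearMap.toSpanSingleton ℝ _ (r x)))
      fun l _ => integrable_logPartition hQ (hr.smul l)

lemma exists_isSaddlePointOn_dualObjective [Nonempty ι] (hr : Integrable r μ) (D : ℝ) {L : ℝ}
    (hL : 0 ≤ L) : ∃ Q ∈ stdSimplex ℝ ι, ∃ l ∈ Set.Icc (-L) 0,
      IsSaddlePointOn (stdSimplex ℝ ι) (Set.Icc (-L) 0) (dualObjective μ r D) Q l :=
  Sion.exists_isSaddlePointOn ⟨_, const_inv_card_mem_stdSimplex⟩ (convex_stdSimplex ℝ ι)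
    (isCompact_stdSimplex ℝ ι)
    (fun l _ => (continuousOn_const.sub
      (continuousOn_integral_logPartition_left (hr.smul l))).lowerSemicontinuousOn)
    (fun l _ => (convexOn_dualObjective_left hr D l).quasiconvexOn)
    (convex_Icc _ _) ⟨0, neg_nonpos.2 hL, le_rfl⟩ isCompact_Icc
    (fun _ hQ => (continuous_iff_continuousAt.2 fun l =>
      (hasDerivAt_dualObjective hQ hr D l).continuousAt).continuousOn.upperSemicontinuousOn)
    (fun _ hQ => ((concaveOn_dualObjective hQ hr D).subset (Set.subset_univ _)
      (convex_Icc _ _)).quasiconcaveOn)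

lemma dualObjective_const_inv_card_le [Nonempty ι] [IsProbabilityMeasure μ] (hr : Integrable r μ)
    (D l : ℝ) : dualObjective μ r D (fun _ => (Fintype.card ι : ℝ)⁻¹) l
      ≤ log (Fintype.card ι) + l * (D - ∫ x, ⨅ j, r x j ∂μ) := by
  have hInf : Integrable (fun x => l * ⨅ j, r x j) μ :=
    (integrable_iInf_of_integrable fun j => hr.eval j).const_mul l
  have hle : ∫ x, (-log (Fintype.card ι) + l * ⨅ j, r x j) ∂μ
      ≤ ∫ x, logPartition (fun _ => (Fintype.card ι : ℝ)⁻¹) (l • r x) ∂μ :=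
    integral_mono ((integrable_const _).add hInf)
      (integrable_logPartition const_inv_card_mem_stdSimplex (hr.smul l))
      fun x => neg_log_card_add_mul_iInf_le_logPartition l (r x)
  rw [integral_add (integrable_const _) hInf, integral_const, probReal_univ, one_smul,
    integral_const_mul] at hle
  rw [dualObjective]
  linarith

lemma exists_dualObjective_minimizer [Nonempty ι] [IsProbabilityMeasure μ] (hr : Integrable r μ)
    {D : ℝ} (hmin : ∫ x, ⨅ j, r x j ∂μ < D)
    (hmax : ∀ Q ∈ stdSimplex ℝ ι, D < ∫ x, Q ⬝ᵥ r x ∂μ) :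
    ∃ Q ∈ stdSimplex ℝ ι, ∃ l ≤ 0,
      (∀ R ∈ stdSimplex ℝ ι, dualObjective μ r D Q l ≤ dualObjective μ r D R l) ∧
        ∫ x, tiltedPmf Q (l • r x) ⬝ᵥ r x ∂μ = D := by
  have hgap : 0 < D - ∫ x, ⨅ j, r x j ∂μ := sub_pos.2 hmin
  obtain ⟨L, hL⟩ := exists_gt (log (Fintype.card ι) / (D - ∫ x, ⨅ j, r x j ∂μ))
  have hL_nonneg : 0 ≤ L := (div_nonneg (log_natCast_nonneg _) hgap.le).trans hL.le
  obtain ⟨Q, hQ, l, hl, hsaddle⟩ := exists_isSaddlePointOn_dualObjective hr D hL_nonneg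
  have hmaxOn : IsMaxOn (dualObjective μ r D Q) (Set.Icc (-L) 0) l := hsaddle Q hQ
  have hneg_L_lt : -L < l := by
    have hunif := (hsaddle _ const_inv_card_mem_stdSimplex 0 ⟨neg_nonpos.2 hL_nonneg, le_rfl⟩).trans
      (dualObjective_const_inv_card_le hr D l)
    rw [dualObjective_zero hQ] at hunif
    have : -l ≤ log (Fintype.card ι) / (D - ∫ x, ⨅ j, r x j ∂μ) :=
      (le_div_iff₀ hgap).2 (by linarith)
    exact neg_lt.1 (this.trans_lt hL)
  have hlt_zero : l < 0 := by
    refine hl.2.lt_of_ne fun h => ?_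
    have hderiv := hasDerivAt_dualObjective hQ hr D 0
    simp only [zero_smul, tiltedPmf_zero hQ] at hderiv
    have hnonneg := nonneg_of_isMaxOn_Icc_of_hasDerivAt_right (h ▸ hneg_L_lt) (h ▸ hmaxOn) hderiv
    exact (sub_nonneg.1 hnonneg).not_gt (hmax Q hQ)
  have hderiv_zero := (hmaxOn.isLocalMax (Icc_mem_nhds hneg_L_lt hlt_zero)).hasDerivAt_eq_zero
    (hasDerivAt_dualObjective hQ hr D l)
  exact ⟨Q, hQ, l, hl.2, fun R hR => hsaddle R hR l hl, (sub_eq_zero.1 hderiv_zero).symm⟩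

lemma dualObjective_le_integral_relEntropy [IsFiniteMeasure μ] (hQ : Q ∈ stdSimplex ℝ ι)
    (hr : Integrable r μ) {D l : ℝ} (hl : l ≤ 0) (hwm : Measurable w)
    (hw : ∀ x, w x ∈ stdSimplex ℝ ι) (hwQ : ∀ᵐ x ∂μ, ∀ j, 0 < w x j → 0 < Q j)
    (hwD : ∫ x, w x ⬝ᵥ r x ∂μ ≤ D) :
    dualObjective μ r D Q l ≤ ∫ x, relEntropy (w x) Q ∂μ := by
  have hdot : Integrable (fun x => w x ⬝ᵥ (l • r x)) μ :=
    integrable_dotProduct (hr.smul l) hwm.aestronglyMeasurable hw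
  have hlog : Integrable (fun x => logPartition Q (l • r x)) μ :=
    integrable_logPartition hQ (hr.smul l)
  calc dualObjective μ r D Q l
      ≤ l * ∫ x, w x ⬝ᵥ r x ∂μ - ∫ x, logPartition Q (l • r x) ∂μ :=
        sub_le_sub_right (mul_le_mul_of_nonpos_left hwD hl) _
    _ = ∫ x, (w x ⬝ᵥ (l • r x) - logPartition Q (l • r x)) ∂μ := by
        rw [integral_sub hdot hlog]
        simp only [dotProduct_smul, smul_eq_mul, integral_const_mul]
    _ ≤ ∫ x, relEntropy (w x) Q ∂μ :=
        integral_mono_ae (hdot.sub hlog) (integrable_relEntropy hwm hw Q) <|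
          hwQ.mono fun x hx => dotProduct_sub_logPartition_le_relEntropy hQ (hw x) hx (l • r x)

lemma integral_relEntropy_tiltedPmf (hQ : Q ∈ stdSimplex ℝ ι) (hr : Integrable r μ) (l : ℝ) :
    ∫ x, relEntropy (tiltedPmf Q (l • r x)) Q ∂μ
      = dualObjective μ r (∫ x, tiltedPmf Q (l • r x) ⬝ᵥ r x ∂μ) Q l := by
  have hdot : Integrable (fun x => tiltedPmf Q (l • r x) ⬝ᵥ (l • r x)) μ :=
    integrable_dotProduct (hr.smul l)
      ((continuous_tiltedPmf hQ).comp_aestronglyMeasurable (hr.1.const_smul l))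
      fun x => tiltedPmf_mem_stdSimplex hQ _
  have hlog : Integrable (fun x => logPartition Q (l • r x)) μ :=
    integrable_logPartition hQ (hr.smul l)
  simp only [relEntropy_tiltedPmf hQ]
  rw [integral_sub hdot hlog, dualObjective]
  simp only [dotProduct_smul, smul_eq_mul, integral_const_mul]

end Duality

section RateDistortion

variable {k : ℕ} {P : Measure ℝ} {ρ : ℝ → Fin k → ℝ} {Q : Fin k → ℝ}

lemma wCost_of_absolutelyContinuous {w : ℝ → Fin k → ℝ}
    (hw : ∀ᵐ x ∂P, ∀ j, 0 < w x j → 0 < Q j) :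
    wCost P Q w = (((∫ x, relEntropy (w x) Q ∂P) / log 2 : ℝ) : EReal) := by
  rw [wCost, if_pos hw, ← integral_div]
  simp only [relEntropy, logb, sum_div, mul_div_assoc]

lemma dualObjective_div_log_two_le_RPQ [IsFiniteMeasure P] (hQ : Q ∈ stdSimplex ℝ (Fin k))
    (hi : Integrable ρ P) (D : ℝ) {l : ℝ} (hl : l ≤ 0) :
    ((dualObjective P ρ D Q l / log 2 : ℝ) : EReal) ≤ RPQ P ρ Q D := by
  refine le_iInf₂ fun w ⟨hwm, hw0, hw1, hwD⟩ => ?_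
  by_cases hw : ∀ᵐ x ∂P, ∀ j, 0 < w x j → 0 < Q j
  · rw [wCost_of_absolutelyContinuous hw, EReal.coe_le_coe_iff]
    exact div_le_div_of_nonneg_right (dualObjective_le_integral_relEntropy hQ hi hl hwm
      (fun x => ⟨hw0 x, hw1 x⟩) hw hwD) (log_nonneg one_le_two)
  · rw [wCost, if_neg hw]
    exact le_top

lemma RPQ_le_dualObjective_div_log_two (hQ : Q ∈ stdSimplex ℝ (Fin k)) (hm : Measurable ρ)
    (hi : Integrable ρ P) {D l : ℝ} (hD : ∫ x, tiltedPmf Q (l • ρ x) ⬝ᵥ ρ x ∂P = D) :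
    RPQ P ρ Q D ≤ ((dualObjective P ρ D Q l / log 2 : ℝ) : EReal) := by
  have hw (x : ℝ) := tiltedPmf_mem_stdSimplex hQ (l • ρ x)
  have hwm : Measurable fun x => tiltedPmf Q (l • ρ x) :=
    (continuous_tiltedPmf hQ).measurable.comp (hm.const_smul l)
  calc RPQ P ρ Q D ≤ wCost P Q fun x => tiltedPmf Q (l • ρ x) :=
        iInf₂_le _ ⟨hwm, fun x => (hw x).1, fun x => (hw x).2, hD.le⟩
    _ = ((dualObjective P ρ D Q l / log 2 : ℝ) : EReal) := by
        rw [wCost_of_absolutelyContinuous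
            (ae_of_all _ fun x j => (tiltedPmf_pos_iff hQ (l • ρ x) j).1),
          integral_relEntropy_tiltedPmf hQ hi, hD]

lemma RPQ_eq_RofD_of_dualObjective_le [IsFiniteMeasure P] (hQ : Q ∈ stdSimplex ℝ (Fin k))
    (hm : Measurable ρ) (hi : Integrable ρ P) {D l : ℝ} (hl : l ≤ 0)
    (hQmin : ∀ R ∈ stdSimplex ℝ (Fin k), dualObjective P ρ D Q l ≤ dualObjective P ρ D R l)
    (hD : ∫ x, tiltedPmf Q (l • ρ x) ⬝ᵥ ρ x ∂P = D) : RPQ P ρ Q D = RofD P ρ D := by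
  refine le_antisymm (le_iInf₂ fun R hR => ?_) (iInf₂_le Q hQ)
  calc RPQ P ρ Q D ≤ ((dualObjective P ρ D Q l / log 2 : ℝ) : EReal) :=
        RPQ_le_dualObjective_div_log_two hQ hm hi hD
    _ ≤ ((dualObjective P ρ D R l / log 2 : ℝ) : EReal) := EReal.coe_le_coe_iff.2 <|
        div_le_div_of_nonneg_right (hQmin R hR) (log_nonneg one_le_two)
    _ ≤ RPQ P ρ R D := dualObjective_div_log_two_le_RPQ hR hi D hl

lemma Dmax_le_DmaxPQ (hQ : Q ∈ stdSimplex ℝ (Fin k)) : Dmax P ρ ≤ DmaxPQ P ρ Q :=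
  le_dotProduct_of_le_on_support hQ fun j _ =>
    csInf_le (Set.finite_range _).bddBelow (Set.mem_range_self j)

end RateDistortion

theorem stmt_13_general {k : ℕ} (hk : 0 < k) {P : Measure ℝ} [IsProbabilityMeasure P]
    {ρ : ℝ → Fin k → ℝ} (hm : Measurable ρ) (hi : Integrable ρ P) {D : ℝ}
    (hmin : ∫ x, ⨅ j, ρ x j ∂P < D) (hmax : D < Dmax P ρ) :
    ∃ Q : Fin k → ℝ, IsPmf Q ∧ RPQ P ρ Q D = RofD P ρ D ∧
      DminPQ P ρ Q < D ∧ D < DmaxPQ P ρ Q := by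
  have : NeZero k := ⟨hk.ne'⟩
  have hmaxQ (Q) (hQ : Q ∈ stdSimplex ℝ (Fin k)) : D < ∫ x, Q ⬝ᵥ ρ x ∂P :=
    (hmax.trans_le (Dmax_le_DmaxPQ hQ)).trans_eq (integral_const_dotProduct hi Q).symm
  obtain ⟨Q, hQ, l, hl, hQmin, hD⟩ := exists_dualObjective_minimizer hi hmin hmaxQ
  refine ⟨Q, hQ, RPQ_eq_RofD_of_dualObjective_le hQ hm hi hl hQmin hD, ?_,
    hmax.trans_le (Dmax_le_DmaxPQ hQ)⟩
  calc DminPQ P ρ Q < ∫ x, tiltedPmf Q (l • ρ x) ⬝ᵥ ρ x ∂P :=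
        integral_iInf_support_lt_integral_dotProduct hQ hi
          ((continuous_tiltedPmf hQ).comp_aestronglyMeasurable (hi.1.const_smul l))
          (fun x => tiltedPmf_mem_stdSimplex hQ _) (fun x => tiltedPmf_pos_iff hQ _)
          (hD ▸ (hmaxQ Q hQ).ne')
    _ = D := hD

/-- **Proposition 1(iv).** For every `D ∈ (0, D_max)` there is a pmf `Q*` achieving
`R(P,Q*,D) = R(D)`, and it satisfies `D_min^{P,Q*} < D < D_max^{P,Q*}`. -/
theorem stmt_13 {k : ℕ} (hk : 0 < k) (A : Set ℝ) (hA : MeasurableSet A)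
    (P : Measure ℝ) [IsProbabilityMeasure P] (hsupp : P Aᶜ = 0)
    (M : ℝ) (ρ : ℝ → Fin k → ℝ) (hρmeas : ∀ j, Measurable fun x => ρ x j)
    (hρnn : ∀ x ∈ A, ∀ j, 0 ≤ ρ x j) (hρM : ∀ x ∈ A, ∀ j, ρ x j ≤ M)
    (hρmin : ∀ x ∈ A, ∃ j, ρ x j = 0)
    (hDmax : 0 < Dmax P ρ) :
    ∀ D : ℝ, 0 < D → D < Dmax P ρ →
      ∃ Q : Fin k → ℝ, IsPmf Q ∧ RPQ P ρ Q D = RofD P ρ D ∧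
        DminPQ P ρ Q < D ∧ D < DmaxPQ P ρ Q := by
  intro D hD hlt
  have hm : Measurable ρ := measurable_pi_iff.2 hρmeas
  have hae : ∀ᵐ x ∂P, x ∈ A := mem_ae_iff.2 hsupp
  have hi : Integrable ρ P :=
    Integrable.of_eval fun j => .of_mem_Icc 0 M (hρmeas j).aemeasurable
      (hae.mono fun x hx => ⟨hρnn x hx j, hρM x hx j⟩)
  have hInf : ∫ x, ⨅ j, ρ x j ∂P = 0 :=
    integral_eq_zero_of_ae <| hae.mono fun x hx =>
      IsLeast.csInf_eq ⟨hρmin x hx, Set.forall_mem_range.2 (hρnn x hx)⟩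
  exact stmt_13_general hk hm hi (hInf.trans_lt hD) hlt
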